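/- Let Ŝ ∈ W_𝔊 be a symmetric positive semidefinite matrix in the fixed-point subspace and μ ≥ 0, and define f(Θ) = Tr(ŜΘ) − log det(Θ) + μ‖Θ‖_{1,off} on symmetric positive definite matrices. Then for every symmetric positive definite Θ, the Reynolds average P_𝔊(Θ) is also symmetric positive definite and f(P_𝔊(Θ)) ≤ f(Θ). -/

import Mathlib

/-!
The objective is convex on the positive definite cone and, since `Ŝ` is `𝔊`-invariant, it is
constant on the orbit `{Π_g Θ Π_gᵀ}`. Its sublevel set at height `f(Θ)` is therefore a convex set
of positive definite matrices containing that orbit, hence also its barycentre `P_𝔊(Θ)`.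

Concavity of `log det` comes from the tangent-plane inequality
`log det B ≤ log det C + tr(C⁻¹B) - n`: taking a convex combination of its instances at the two
endpoints, with base point `C` the combination itself, the trace terms add up to `tr(C⁻¹C) = n`.
Writing `C⁻¹ = LᴴL` and replacing `B` by `L B Lᴴ` reduces the inequality to `C = 1`, where it is
`log x ≤ x - 1` summed over the eigenvalues.
-/

open MeasureTheory ProbabilityTheory Matrix Finset Real

noncomputable section

/-- The `p × p` permutation matrix `Π_σ` of a permutation `σ` of `Fin p`. -/
def permMatrix {p : ℕ} (σ : Equiv.Perm (Fin p)) : Matrix (Fin p) (Fin p) ℝ :=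
  Matrix.of fun i j => if σ j = i then (1 : ℝ) else 0

/-- `M` lies in the fixed-point subspace `W_𝔊`, i.e. `Π_g M Π_gᵀ = M` for all `g ∈ 𝔊`. -/
def IsFixedPoint {p : ℕ} (G : Subgroup (Equiv.Perm (Fin p)))
    (M : Matrix (Fin p) (Fin p) ℝ) : Prop :=
  ∀ g ∈ G, permMatrix g * M * (permMatrix g)ᵀ = M

/-- The Reynolds average `P_𝔊(M) = |𝔊|⁻¹ ∑_{g ∈ 𝔊} Π_g M Π_gᵀ`. -/
def reynolds {p : ℕ} (G : Subgroup (Equiv.Perm (Fin p))) [Fintype G]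
    (M : Matrix (Fin p) (Fin p) ℝ) : Matrix (Fin p) (Fin p) ℝ :=
  (Fintype.card G : ℝ)⁻¹ •
    ∑ g : G, permMatrix (g : Equiv.Perm (Fin p)) * M * (permMatrix (g : Equiv.Perm (Fin p)))ᵀ

/-- The off-diagonal ℓ₁ norm `‖M‖_{1,off} = ∑_{i ≠ j} |M_ij|`. -/
def offDiagL1 {p : ℕ} (M : Matrix (Fin p) (Fin p) ℝ) : ℝ :=
  ∑ i, ∑ j, if i ≠ j then |M i j| else 0

/-- The ℓ₁-regularized log-determinant objective `Θ ↦ Tr(ŜΘ) − log det Θ + μ ‖Θ‖_{1,off}`. -/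
def logDetObjective {p : ℕ} (A : Matrix (Fin p) (Fin p) ℝ) (μ : ℝ)
    (Θ : Matrix (Fin p) (Fin p) ℝ) : ℝ :=
  (A * Θ).trace - Real.log Θ.det + μ * offDiagL1 Θ

section LogDet

open scoped ComplexOrder MatrixOrder

variable {n 𝕜 : Type*} [RCLike 𝕜]

theorem convex_setOf_posDef : Convex ℝ {A : Matrix n n 𝕜 | A.PosDef} :=
  convex_iff_forall_pos.mpr fun _ hA _ hB _ _ ha hb _ => (hA.smul ha).add (hB.smul hb)

variable [Fintype n] [DecidableEq n] {A B : Matrix n n 𝕜}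

theorem log_norm_det_le_re_trace_sub_card (hA : A.PosDef) :
    log ‖A.det‖ ≤ RCLike.re A.trace - Fintype.card n := by
  have hpos := hA.eigenvalues_pos
  calc
    log ‖A.det‖ = log (∏ i, hA.1.eigenvalues i) := by
      rw [hA.1.det_eq_prod_eigenvalues, ← RCLike.ofReal_prod, RCLike.norm_ofReal, log_abs]
    _ = ∑ i, log (hA.1.eigenvalues i) := log_prod fun i _ => (hpos i).ne'
    _ ≤ ∑ i, (hA.1.eigenvalues i - 1) := sum_le_sum fun i _ => log_le_sub_one_of_pos (hpos i)
    _ = RCLike.re A.trace - Fintype.card n := by simp [hA.1.trace_eq_sum_eigenvalues]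

theorem log_norm_det_le_add_re_trace_inv_mul (hA : A.PosDef) (hB : B.PosDef) :
    log ‖B.det‖ ≤ log ‖A.det‖ + RCLike.re (A⁻¹ * B).trace - Fintype.card n := by
  obtain ⟨L, hL, hAL⟩ := CStarAlgebra.isStrictlyPositive_iff_eq_star_mul_self.mp
    hA.inv.isStrictlyPositive
  rw [star_eq_conjTranspose] at hAL
  have htrace : (L * B * Lᴴ).trace = (A⁻¹ * B).trace := by
    rw [hAL, trace_mul_comm, Matrix.mul_assoc]
  have hdet : (L * B * Lᴴ).det = A.det⁻¹ * B.det := by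
    rw [← Ring.inverse_eq_inv', ← det_nonsing_inv, hAL]
    simp only [det_mul]
    ring
  have hlog : log ‖(L * B * Lᴴ).det‖ = log ‖B.det‖ - log ‖A.det‖ := by
    rw [hdet, norm_mul, norm_inv, inv_mul_eq_div,
      log_div (norm_ne_zero_iff.mpr hB.det_pos.ne') (norm_ne_zero_iff.mpr hA.det_pos.ne')]
  have hconj := log_norm_det_le_re_trace_sub_card
    (hB.mul_mul_conjTranspose_same (vecMul_injective_of_isUnit hL))
  rw [hlog, htrace] at hconj
  linarith

theorem concaveOn_log_norm_det :
    ConcaveOn ℝ {A : Matrix n n 𝕜 | A.PosDef} fun A => log ‖A.det‖ := by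
  refine ⟨convex_setOf_posDef, fun A hA B hB a b ha hb hab => ?_⟩
  set C := a • A + b • B with hCdef
  have hC : C.PosDef := convex_setOf_posDef hA hB ha hb hab
  have htrace : a * RCLike.re (C⁻¹ * A).trace + b * RCLike.re (C⁻¹ * B).trace =
      Fintype.card n := by
    have hinv : C⁻¹ * C = 1 := nonsing_inv_mul C hC.det_pos.ne'.isUnit
    have := congrArg (fun M => RCLike.re M.trace) hinv
    nth_rw 2 [hCdef] at this
    simpa [Matrix.mul_add, RCLike.smul_re] using this
  calc
    a * log ‖A.det‖ + b * log ‖B.det‖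
      ≤ a * (log ‖C.det‖ + RCLike.re (C⁻¹ * A).trace - Fintype.card n) +
          b * (log ‖C.det‖ + RCLike.re (C⁻¹ * B).trace - Fintype.card n) := by
        gcongr
        · exact log_norm_det_le_add_re_trace_inv_mul hC hA
        · exact log_norm_det_le_add_re_trace_inv_mul hC hB
    _ = log ‖C.det‖ := by linear_combination htrace + (log ‖C.det‖ - Fintype.card n) * hab

end LogDet

section Objective

variable {p : ℕ}

theorem offDiagL1_add_le (M N : Matrix (Fin p) (Fin p) ℝ) :
    offDiagL1 (M + N) ≤ offDiagL1 M + offDiagL1 N := by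
  simp only [offDiagL1, ← sum_add_distrib]
  gcongr with i _ j _
  split_ifs
  · exact abs_add_le _ _
  · simp

theorem offDiagL1_smul (c : ℝ) (M : Matrix (Fin p) (Fin p) ℝ) :
    offDiagL1 (c • M) = |c| * offDiagL1 M := by
  simp [offDiagL1, mul_sum, abs_mul]

theorem convexOn_offDiagL1 :
    ConvexOn ℝ Set.univ (offDiagL1 : Matrix (Fin p) (Fin p) ℝ → ℝ) :=
  (Seminorm.of offDiagL1 offDiagL1_add_le offDiagL1_smul).convexOn

theorem convexOn_logDetObjective (A : Matrix (Fin p) (Fin p) ℝ) {μ : ℝ} (hμ : 0 ≤ μ) :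
    ConvexOn ℝ {Θ | Θ.PosDef} (logDetObjective A μ) := by
  have htrace : ConvexOn ℝ {Θ | Θ.PosDef} fun Θ => (A * Θ).trace :=
    (traceLinearMap (Fin p) ℝ ℝ ∘ₗ LinearMap.mulLeft ℝ A).convexOn convex_setOf_posDef
  have hlog : ConcaveOn ℝ {Θ : Matrix (Fin p) (Fin p) ℝ | Θ.PosDef} fun Θ => log Θ.det := by
    simpa only [norm_eq_abs, log_abs] using concaveOn_log_norm_det (n := Fin p) (𝕜 := ℝ)
  have hoff : ConvexOn ℝ {Θ : Matrix (Fin p) (Fin p) ℝ | Θ.PosDef} fun Θ => μ * offDiagL1 Θ :=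
    (convexOn_offDiagL1.smul hμ).subset (Set.subset_univ _) convex_setOf_posDef
  exact (htrace.sub hlog).add hoff

theorem permMatrix_mul_mul_transpose (σ : Equiv.Perm (Fin p)) (M : Matrix (Fin p) (Fin p) ℝ) :
    permMatrix σ * M * (permMatrix σ)ᵀ = M.submatrix σ.symm σ.symm := by
  ext i j
  simp [mul_apply, permMatrix, ← Equiv.eq_symm_apply]

theorem posDef_permMatrix_mul_mul_transpose (σ : Equiv.Perm (Fin p))
    {M : Matrix (Fin p) (Fin p) ℝ} (hM : M.PosDef) :
    (permMatrix σ * M * (permMatrix σ)ᵀ).PosDef := by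
  rw [permMatrix_mul_mul_transpose]
  exact hM.submatrix σ.symm.injective

theorem offDiagL1_submatrix_equiv (σ : Equiv.Perm (Fin p)) (M : Matrix (Fin p) (Fin p) ℝ) :
    offDiagL1 (M.submatrix σ σ) = offDiagL1 M :=
  Fintype.sum_equiv σ _ _ fun _ => Fintype.sum_equiv σ _ _ fun _ => by simp

theorem logDetObjective_submatrix_equiv (σ : Equiv.Perm (Fin p))
    (A : Matrix (Fin p) (Fin p) ℝ) (μ : ℝ) (Θ : Matrix (Fin p) (Fin p) ℝ) :
    logDetObjective (A.submatrix σ σ) μ (Θ.submatrix σ σ) = logDetObjective A μ Θ := by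
  have htrace : ((A * Θ).submatrix σ σ).trace = (A * Θ).trace :=
    Equiv.sum_comp σ fun i => (A * Θ) i i
  simp only [logDetObjective, submatrix_mul_equiv, htrace, det_submatrix_equiv_self,
    offDiagL1_submatrix_equiv]

theorem logDetObjective_permMatrix_mul_mul_transpose {G : Subgroup (Equiv.Perm (Fin p))}
    {A : Matrix (Fin p) (Fin p) ℝ} (hA : IsFixedPoint G A) (μ : ℝ)
    (Θ : Matrix (Fin p) (Fin p) ℝ) {g : Equiv.Perm (Fin p)} (hg : g ∈ G) :
    logDetObjective A μ (permMatrix g * Θ * (permMatrix g)ᵀ) = logDetObjective A μ Θ := by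
  nth_rw 1 [← hA g hg]
  simp only [permMatrix_mul_mul_transpose, logDetObjective_submatrix_equiv]

theorem reynolds_mem (G : Subgroup (Equiv.Perm (Fin p))) [Fintype G]
    {s : Set (Matrix (Fin p) (Fin p) ℝ)} (hs : Convex ℝ s) {M : Matrix (Fin p) (Fin p) ℝ}
    (hM : ∀ g ∈ G, permMatrix g * M * (permMatrix g)ᵀ ∈ s) : reynolds G M ∈ s := by
  rw [reynolds, smul_sum]
  exact hs.sum_mem (fun _ _ => by positivity) (by simp) fun g _ => hM g g.2

theorem logDetObjective_reynolds_le_general (G : Subgroup (Equiv.Perm (Fin p))) [Fintype G]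
    (A : Matrix (Fin p) (Fin p) ℝ) (hA : IsFixedPoint G A) (μ : ℝ) (hμ : 0 ≤ μ)
    (Θ : Matrix (Fin p) (Fin p) ℝ) (hΘ : Θ.PosDef) :
    (reynolds G Θ).PosDef ∧
      logDetObjective A μ (reynolds G Θ) ≤ logDetObjective A μ Θ := by
  have hsublevel : Convex ℝ
      {X ∈ {X : Matrix (Fin p) (Fin p) ℝ | X.PosDef} |
        logDetObjective A μ X ≤ logDetObjective A μ Θ} :=
    (convexOn_logDetObjective A hμ).convex_le _
  exact reynolds_mem G hsublevel fun g hg =>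
    ⟨posDef_permMatrix_mul_mul_transpose g hΘ,
      (logDetObjective_permMatrix_mul_mul_transpose hA μ Θ hg).le⟩

end Objective

/-- Reynolds averaging does not increase the ℓ₁-regularized log-determinant objective with a
`𝔊`-invariant positive semidefinite input matrix `Ŝ`: for positive definite `Θ`, the
Reynolds average `P_𝔊(Θ)` is positive definite and `f(P_𝔊(Θ)) ≤ f(Θ)`. -/
theorem logDetObjective_reynolds_le
    {p : ℕ} (G : Subgroup (Equiv.Perm (Fin p))) [Fintype G]
    (Shat : Matrix (Fin p) (Fin p) ℝ) (hShat : Shat.PosSemidef)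
    (hfix : IsFixedPoint G Shat) (μ : ℝ) (hμ : 0 ≤ μ)
    (Θ : Matrix (Fin p) (Fin p) ℝ) (hΘ : Θ.PosDef) :
    (reynolds G Θ).PosDef ∧
      logDetObjective Shat μ (reynolds G Θ) ≤ logDetObjective Shat μ Θ :=
  logDetObjective_reynolds_le_general G Shat hfix μ hμ Θ hΘ

end
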